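/- arXiv:0902.3860 — 2 statements merged into one kernel-verified Lean document; each statement's English description precedes it below -/
import Mathlib

section
/- Let Γ be a distance-regular graph with valency k, diameter D ≥ 2, intersection numbers a₁, c₂, and set α = ⌈k/(a₁+1)⌉. Then c₂ - 1 ≥ (α(a₁+1) - k) / C(α,2). -/
open Finset SimpleGraph

/-- `G` is a distance-regular graph with diameter `D` and intersection numbers
`b i`, `c i`, `a i` (so valency `k = b 0` and `a i = k - b i - c i`). -/
structure IsDRG {V : Type*} [Fintype V] (G : SimpleGraph V) (D : ℕ)
    (b c a : ℕ → ℕ) : Prop where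
  connected : G.Connected
  le_diam : ∀ x y : V, G.dist x y ≤ D
  exists_diam : ∃ x y : V, G.dist x y = D
  card_b : ∀ i, i ≤ D → ∀ x y : V, G.dist x y = i →
      Nat.card {z : V | G.Adj y z ∧ G.dist x z = i + 1} = b i
  card_c : ∀ i, i ≤ D → ∀ x y : V, G.dist x y = i →
      Nat.card {z : V | G.Adj y z ∧ G.dist x z = i - 1} = c i
  card_a : ∀ i, i ≤ D → ∀ x y : V, G.dist x y = i →
      Nat.card {z : V | G.Adj y z ∧ G.dist x z = i} = a i

/-!
The local graph at a vertex `x` has `k` vertices and is regular of degree `a₁`. The closed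
neighbourhoods of the vertices of a maximal coclique cover it, so some coclique `T` has exactly
`α = ⌈k / (a₁ + 1)⌉` vertices. The closed neighbourhoods of the vertices of `T` have size `a₁ + 1`
and meet pairwise in at most `c₂ - 1` vertices, because `x` is one further common neighbour in the
whole graph. Bonferroni's inequality gives `α (a₁ + 1) - C(α, 2) (c₂ - 1) ≤ k`.
-/

theorem sum_card_le_card_biUnion_add_choose_two_mul {ι β : Type*} [DecidableEq β]
    (A : ι → Finset β) (T : Finset ι) {m : ℕ}
    (hm : (T : Set ι).Pairwise fun s t => #(A s ∩ A t) ≤ m) :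
    ∑ t ∈ T, #(A t) ≤ #(T.biUnion A) + (#T).choose 2 * m := by
  classical
  induction T using Finset.induction_on with
  | empty => simp
  | insert s T hs ih =>
    have hT := ih (hm.mono (coe_subset.2 (subset_insert s T)))
    have hinter : #(A s ∩ T.biUnion A) ≤ #T * m := by
      rw [inter_biUnion]
      refine card_biUnion_le_card_mul _ _ _ fun t ht => ?_
      exact hm (mem_insert_self s T) (mem_insert_of_mem ht) (ne_of_mem_of_not_mem ht hs).symm
    have hunion := card_union_add_card_inter (A s) (T.biUnion A)
    rw [sum_insert hs, biUnion_insert, card_insert_of_notMem hs, Nat.choose_succ_succ' (#T) 1,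
      Nat.choose_one_right, one_add_one_eq_two, add_mul]
    omega

theorem natCast_ceilDiv_eq_ceil_div {K : Type*} [Field K] [LinearOrder K] [IsStrictOrderedRing K]
    [FloorRing K] (n d : ℕ) : ((n ⌈/⌉ d : ℕ) : ℤ) = ⌈(n : K) / d⌉ := by
  obtain rfl | hd := d.eq_zero_or_pos
  · simp
  have hceil : n ⌈/⌉ d = ⌈(n : K) / d⌉₊ := eq_of_forall_ge_iff fun j => by
    rw [ceilDiv_le_iff_le_mul hd, Nat.ceil_le, div_le_iff₀' (by exact_mod_cast hd)]
    exact_mod_cast Iff.rfl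
  rw [hceil, Int.natCast_ceil_eq_ceil (by positivity)]

theorem dist_eq_two_iff {V : Type*} {G : SimpleGraph V} {v w : V} :
    G.dist v w = 2 ↔ v ≠ w ∧ ¬ G.Adj v w ∧ (G.commonNeighbors v w).Nonempty := by
  rw [← edist_eq_two_iff, SimpleGraph.dist, ENat.toNat_eq_iff two_ne_zero, Nat.cast_ofNat]

section Coclique

/-- The closed neighbourhood of a vertex `v`: the vertex itself together with its neighbours.
These sets, taken in a local graph, are the ones counted by Bonferroni's inequality. -/
def closedNeighborFinset {V : Type*} [DecidableEq V] (G : SimpleGraph V) [G.LocallyFinite]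
    (v : V) : Finset V :=
  insert v (G.neighborFinset v)

variable {V : Type*} {G : SimpleGraph V} [G.LocallyFinite]

theorem card_closedNeighborFinset [DecidableEq V] (v : V) :
    #(closedNeighborFinset G v) = G.degree v + 1 := by
  rw [closedNeighborFinset, card_insert_of_notMem (G.notMem_neighborFinset_self v),
    card_neighborFinset_eq_degree]

theorem coe_closedNeighborFinset_inter [DecidableEq V] {v w : V} (hne : v ≠ w)
    (hvw : ¬ G.Adj v w) :
    (↑(closedNeighborFinset G v ∩ closedNeighborFinset G w) : Set V) = G.commonNeighbors v w := by
  ext u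
  simp only [closedNeighborFinset, mem_coe, mem_inter, mem_insert, mem_neighborFinset,
    mem_commonNeighbors]
  grind [G.adj_comm]

variable [Fintype V]

theorem biUnion_closedNeighborFinset_eq_univ_of_maximal_isIndepSet [DecidableEq V] {I : Finset V}
    (hI : Maximal G.IsIndepSet (I : Set V)) : I.biUnion (closedNeighborFinset G) = univ := by
  refine eq_univ_of_forall fun v => ?_
  by_contra hv
  simp only [closedNeighborFinset, mem_biUnion, mem_insert, mem_neighborFinset, not_exists, not_and,
    not_or] at hv
  have hinsert : G.IsIndepSet (insert v (I : Set V)) :=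
    hI.prop.insert fun u hu _ => ⟨fun h => (hv u hu).2 h.symm, (hv u hu).2⟩
  exact (hv v (hI.le_of_ge hinsert (Set.subset_insert v I) (Set.mem_insert v I))).1 rfl

theorem exists_isNIndepSet_ceilDiv {d : ℕ} (hd : ∀ v, G.degree v ≤ d) :
    ∃ T : Finset V, G.IsNIndepSet (Fintype.card V ⌈/⌉ (d + 1)) T := by
  classical
  obtain ⟨I, hI⟩ := G.maximumIndepSet_exists
  have hcover : Fintype.card V ≤ #I * (d + 1) := by
    rw [← card_univ,
      ← biUnion_closedNeighborFinset_eq_univ_of_maximal_isIndepSet hI.isMaximalIndepSet]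
    refine card_biUnion_le_card_mul _ _ _ fun v _ => ?_
    grw [card_closedNeighborFinset, hd]
  have hle : Fintype.card V ⌈/⌉ (d + 1) ≤ #I := by
    rwa [ceilDiv_le_iff_le_mul d.succ_pos, mul_comm]
  obtain ⟨T, hTI, hT⟩ := exists_subset_card_eq hle
  exact ⟨T, hI.isIndepSet.mono (coe_subset.2 hTI), hT⟩

theorem ceilDiv_mul_le_card_add_choose_two_mul {d m : ℕ} (hG : G.IsRegularOfDegree d)
    (hm : ∀ v w, v ≠ w → ¬ G.Adj v w → (G.commonNeighbors v w).ncard ≤ m) :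
    Fintype.card V ⌈/⌉ (d + 1) * (d + 1) ≤
      Fintype.card V + (Fintype.card V ⌈/⌉ (d + 1)).choose 2 * m := by
  classical
  obtain ⟨T, hindep, hcard⟩ :=
    exists_isNIndepSet_ceilDiv fun v => (hG.degree_eq v).le
  rw [← hcard]
  calc #T * (d + 1) = ∑ v ∈ T, #(closedNeighborFinset G v) := by
        simp only [card_closedNeighborFinset, hG.degree_eq, sum_const, smul_eq_mul]
    _ ≤ #(T.biUnion (closedNeighborFinset G)) + (#T).choose 2 * m := by
        refine sum_card_le_card_biUnion_add_choose_two_mul _ _ fun v hv w hw hne => ?_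
        have hvw : ¬ G.Adj v w := hindep hv hw hne
        beta_reduce
        rw [← Set.ncard_coe_finset, coe_closedNeighborFinset_inter hne hvw]
        exact hm v w hne hvw
    _ ≤ Fintype.card V + (#T).choose 2 * m := by grw [card_le_univ]

end Coclique

section LocalGraph

variable {V : Type*} {G : SimpleGraph V} {x : V}

theorem image_neighborSet_induce_neighborSet (y : G.neighborSet x) :
    (↑) '' (G.induce (G.neighborSet x)).neighborSet y = G.commonNeighbors x y := by
  rw [neighborSet_induce, Subtype.image_preimage_coe, commonNeighbors_eq]

theorem degree_induce_neighborSet (y : G.neighborSet x)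
    [Fintype ((G.induce (G.neighborSet x)).neighborSet y)] :
    (G.induce (G.neighborSet x)).degree y = (G.commonNeighbors x y).ncard := by
  rw [← image_neighborSet_induce_neighborSet, Set.ncard_image_of_injective _ Subtype.val_injective,
    Set.ncard_eq_toFinset_card', ← card_neighborFinset_eq_degree, neighborFinset_def]

theorem ncard_commonNeighbors_induce_neighborSet_lt {y z : G.neighborSet x}
    (hfin : (G.commonNeighbors (y : V) z).Finite) :
    ((G.induce (G.neighborSet x)).commonNeighbors y z).ncard <
      (G.commonNeighbors (y : V) z).ncard := by
  rw [← Set.ncard_image_of_injective _ Subtype.val_injective]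
  refine Set.ncard_lt_ncard ⟨?_, fun hsub => ?_⟩ hfin
  · rintro _ ⟨u, hu, rfl⟩
    exact hu
  · obtain ⟨u, -, hux⟩ := hsub (show x ∈ G.commonNeighbors (y : V) z from ⟨y.2.symm, z.2.symm⟩)
    exact G.irrefl (hux ▸ u.2)

end LocalGraph

/-- An amply regular graph with parameters `(k, l, m)`: every vertex has `k` neighbours, adjacent
vertices have `l` common neighbours, and vertices at distance two have `m` common neighbours (`l`
and `m` are usually written `λ` and `μ`). It is the part of distance-regularity that the bound rests
on. The graph may be infinite and need not be connected. -/
structure IsAmplyRegular {V : Type*} (G : SimpleGraph V) [G.LocallyFinite] (k l m : ℕ) : Prop where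
  isRegularOfDegree : G.IsRegularOfDegree k
  ncard_commonNeighbors_of_adj : ∀ v w, G.Adj v w → (G.commonNeighbors v w).ncard = l
  ncard_commonNeighbors_of_dist_eq_two :
    ∀ v w, G.dist v w = 2 → (G.commonNeighbors v w).ncard = m

theorem IsAmplyRegular.ceilDiv_mul_le_add_choose_two_mul {V : Type*} [Nonempty V]
    {G : SimpleGraph V} [G.LocallyFinite] {k l m : ℕ} (hG : IsAmplyRegular G k l m) :
    k ⌈/⌉ (l + 1) * (l + 1) ≤ k + (k ⌈/⌉ (l + 1)).choose 2 * (m - 1) := by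
  classical
  obtain ⟨x⟩ := ‹Nonempty V›
  have hlocal : (G.induce (G.neighborSet x)).IsRegularOfDegree l := fun y => by
    rw [degree_induce_neighborSet, hG.ncard_commonNeighbors_of_adj x y y.2]
  have hcard : Fintype.card (G.neighborSet x) = k := by
    rw [card_neighborSet_eq_degree, hG.isRegularOfDegree.degree_eq]
  rw [← hcard]
  refine ceilDiv_mul_le_card_add_choose_two_mul hlocal fun y z hne hyz => Nat.le_sub_one_of_lt ?_
  have hdist : G.dist (y : V) z = 2 :=
    dist_eq_two_iff.2 ⟨Subtype.coe_ne_coe.2 hne, hyz, x, y.2.symm, z.2.symm⟩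
  rw [← hG.ncard_commonNeighbors_of_dist_eq_two y z hdist]
  exact ncard_commonNeighbors_induce_neighborSet_lt
    ((Set.toFinite _).subset (G.commonNeighbors_subset_neighborSet_left y z))

namespace IsDRG

variable {V : Type*} [Fintype V] {G : SimpleGraph V} {D : ℕ} {b c a : ℕ → ℕ}

theorem isAmplyRegular [G.LocallyFinite] (hG : IsDRG G D b c a) (hD : 2 ≤ D) :
    IsAmplyRegular G (b 0) (a 1) (c 2) where
  isRegularOfDegree v := by
    rw [← hG.card_b 0 D.zero_le v v dist_self, ← card_neighborSet_eq_degree,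
      ← Nat.card_eq_fintype_card]
    simp [neighborSet, dist_eq_one_iff_adj]
  ncard_commonNeighbors_of_adj v w hvw := by
    rw [← hG.card_a 1 (by omega) v w (dist_eq_one_iff_adj.2 hvw), Nat.card_coe_set_eq]
    simp only [dist_eq_one_iff_adj, and_comm]
    rfl
  ncard_commonNeighbors_of_dist_eq_two v w hvw := by
    rw [← hG.card_c 2 hD v w hvw, Nat.card_coe_set_eq]
    simp only [Nat.add_one_sub_one, dist_eq_one_iff_adj, and_comm]
    rfl

theorem exists_dist_eq_two (hG : IsDRG G D b c a) (hD : 2 ≤ D) : ∃ v w : V, G.dist v w = 2 := by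
  obtain ⟨u, v, huv⟩ := hG.exists_diam
  obtain ⟨p, hp⟩ := hG.connected.exists_walk_length_eq_dist u v
  obtain ⟨x, y, z, hxy, hyz, hxz, hne⟩ := Walk.exists_adj_adj_not_adj_ne hp (by omega)
  exact ⟨x, z, dist_eq_two_iff.2 ⟨hne, hxz, y, hxy, hyz.symm⟩⟩

end IsDRG

theorem stmt1_general {V : Type*} {G : SimpleGraph V} [G.LocallyFinite] {k l m α : ℕ}
    (hG : IsAmplyRegular G k l m) (hdist : ∃ v w, G.dist v w = 2)
    (hα : (α : ℤ) = ⌈(k : ℚ) / ((l : ℚ) + 1)⌉) :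
    ((m : ℝ) - 1) ≥ ((α : ℝ) * (l + 1) - k) / (α.choose 2 : ℝ) := by
  obtain ⟨v, w, hvw⟩ := hdist
  have : Nonempty V := ⟨v⟩
  have hm : 1 ≤ m := by
    rw [← hG.ncard_commonNeighbors_of_dist_eq_two v w hvw, Nat.one_le_iff_ne_zero]
    exact Set.ncard_ne_zero_of_mem (dist_eq_two_iff.1 hvw).2.2.some_mem
      ((Set.toFinite _).subset (G.commonNeighbors_subset_neighborSet_left v w))
  obtain rfl : α = k ⌈/⌉ (l + 1) := by
    rw [← Nat.cast_succ, ← natCast_ceilDiv_eq_ceil_div] at hα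
    exact_mod_cast hα
  have hbound := hG.ceilDiv_mul_le_add_choose_two_mul
  rify [hm] at hbound
  refine div_le_of_le_mul₀ (Nat.cast_nonneg _) (sub_nonneg.2 (by exact_mod_cast hm)) ?_
  linarith

/-- For a distance-regular graph with diameter `D ≥ 2` and `α = ⌈k/(a₁+1)⌉`, one has
`c₂ - 1 ≥ (α(a₁+1) - k) / C(α,2)`. -/
theorem stmt1 {V : Type*} [Fintype V] (G : SimpleGraph V) (D : ℕ) (b c a : ℕ → ℕ)
    (hD : 2 ≤ D) (hG : IsDRG G D b c a)
    (α : ℕ) (hα : (α : ℤ) = ⌈(b 0 : ℚ) / ((a 1 : ℚ) + 1)⌉) :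
    ((c 2 : ℝ) - 1) ≥ ((α : ℝ) * (a 1 + 1) - b 0) / (α.choose 2 : ℝ) := by
  classical
  exact stmt1_general (hG.isAmplyRegular hD) (hG.exists_dist_eq_two hD) hα
end

section
/- For every fixed integer β ≥ 2, a Shilla distance-regular graph Γ with b(Γ) = β has valency k < 4β¹⁰. Consequently there are only finitely many Shilla distance-regular graphs with b(Γ) = β. -/
open Finset SimpleGraph

/-- `θ` is an eigenvalue of the adjacency matrix of `G`. -/
def IsEig {V : Type*} [Fintype V] [DecidableEq V] (G : SimpleGraph V)
    [DecidableRel G.Adj] (θ : ℝ) : Prop :=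
  ∃ v : V → ℝ, v ≠ 0 ∧ (G.adjMatrix ℝ).mulVec v = θ • v

/-- `θ` is the second largest eigenvalue of `G` (`k` being the largest). -/
def IsSecondLargestEig {V : Type*} [Fintype V] [DecidableEq V] (G : SimpleGraph V)
    [DecidableRel G.Adj] (k θ : ℝ) : Prop :=
  IsEig G θ ∧ θ < k ∧ ∀ η : ℝ, IsEig G η → η ≠ k → η ≤ θ

/-- `θ` is the smallest eigenvalue of `G`. -/
def IsSmallestEig {V : Type*} [Fintype V] [DecidableEq V] (G : SimpleGraph V)
    [DecidableRel G.Adj] (θ : ℝ) : Prop :=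
  IsEig G θ ∧ ∀ η : ℝ, IsEig G η → θ ≤ η

/-- The multiplicity of `θ` as an eigenvalue of the adjacency matrix of `G`. -/
noncomputable def eigMult {V : Type*} [Fintype V] [DecidableEq V] (G : SimpleGraph V)
    [DecidableRel G.Adj] (θ : ℝ) : ℕ :=
  Module.finrank ℝ ↥(Module.End.eigenspace (Matrix.toLin' (G.adjMatrix ℝ)) θ)

/-- A Shilla distance-regular graph: diameter `3` and second largest eigenvalue `a 3`. -/
structure IsShilla {V : Type*} [Fintype V] [DecidableEq V] (G : SimpleGraph V)
    [DecidableRel G.Adj] (b c a : ℕ → ℕ) : Prop where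
  drg : IsDRG G 3 b c a
  second : IsSecondLargestEig G (b 0) ((a 3 : ℝ))

/-! The multiplicity `m` of the eigenvalue `a₃` is squeezed from two sides. Let `E` be the matrix
with entries `u (dist x y)`, where `u` is the standard sequence of `a₃`; a multiple of `E` projects
onto the eigenspace, so `E` has rank at most `m`, and comparing traces gives Biggs' formula
`m (1 + k u₁² + ⋯) = n`, hence `m a₃ ≤ n β`. As `u₂ = 0`, the entrywise product of `E` with
`E y z - E y x * E x z / u₁` restricts to a nonzero multiple of the identity on the neighbours of
`x`, whence `k ≤ m²`. A coclique of size `β + 1` in a local graph bounds `c₂` from below by a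
multiple of `a₃ / β²`, so `n < 2 β⁴ a₃` when `a₃` is large. Then `m < 2 β⁵` and `k < 4 β¹⁰`.
-/

open Module Matrix

section Rank

variable {m n K : Type*} [Fintype n] [Field K]

lemma rank_hadamard_le (A B : Matrix m n K) : (A ⊙ B).rank ≤ A.rank * B.rank := by
  simp only [rank_eq_finrank_span_cols]
  set S := Submodule.span K (Set.range A.col)
  set T := Submodule.span K (Set.range B.col)
  have : FiniteDimensional K S := .span_of_finite K (Set.finite_range _)
  have : FiniteDimensional K T := .span_of_finite K (Set.finite_range _)
  have hle : Submodule.span K (Set.range (A ⊙ B).col) ≤ LinearMap.range (S.mulMap T) := by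
    rw [Submodule.mulMap_range, Submodule.span_le]
    rintro _ ⟨j, rfl⟩
    exact Submodule.mul_mem_mul (Submodule.subset_span ⟨j, rfl⟩) (Submodule.subset_span ⟨j, rfl⟩)
  calc finrank K (Submodule.span K (Set.range (A ⊙ B).col))
      ≤ finrank K (LinearMap.range (S.mulMap T)) := Submodule.finrank_mono hle
    _ ≤ finrank K (TensorProduct K S T) := LinearMap.finrank_range_le _
    _ = finrank K S * finrank K T := finrank_tensorProduct

end Rank

section Counting

lemma sum_card_le_card_biUnion_add {ι α : Type*} [DecidableEq α] {T : Finset ι}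
    {N : ι → Finset α} {μ : ℕ} (hN : (T : Set ι).Pairwise fun i j => #(N i ∩ N j) ≤ μ) :
    ∑ i ∈ T, #(N i) ≤ #(T.biUnion N) + (#T).choose 2 * μ := by
  classical
  induction T using Finset.induction_on with
  | empty => simp
  | insert i T hi ih =>
    rw [coe_insert, Set.pairwise_insert_of_notMem (by simpa using hi)] at hN
    have hinter : #(N i ∩ T.biUnion N) ≤ #T * μ := by
      rw [inter_biUnion]
      exact card_biUnion_le_card_mul _ _ _ fun j hj => (hN.2 j hj).1
    calc ∑ j ∈ insert i T, #(N j) = #(N i) + ∑ j ∈ T, #(N j) := sum_insert hi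
      _ ≤ #(N i) + (#(T.biUnion N) + (#T).choose 2 * μ) := by gcongr; exact ih hN.1
      _ = #(N i ∪ T.biUnion N) + #(N i ∩ T.biUnion N) + (#T).choose 2 * μ := by
        rw [card_union_add_card_inter, add_assoc]
      _ ≤ #(N i ∪ T.biUnion N) + #T * μ + (#T).choose 2 * μ := by gcongr
      _ = #((insert i T).biUnion N) + (#(insert i T)).choose 2 * μ := by
        rw [biUnion_insert, card_insert_of_notMem hi, Nat.choose_succ_succ', Nat.choose_one_right]
        ring

lemma exists_isNIndepSet_of_card_adj_le {V : Type*} {G : SimpleGraph V} [DecidableRel G.Adj]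
    {S : Finset V} {d s : ℕ} (hd : ∀ y ∈ S, #{z ∈ S | G.Adj y z} ≤ d)
    (hs : s * (d + 1) < #S) : ∃ T ⊆ S, G.IsNIndepSet (s + 1) T := by
  classical
  induction s with
  | zero =>
    obtain ⟨y, hy⟩ := card_pos.1 (by omega : 0 < #S)
    exact ⟨{y}, by simpa using hy, by simp, by simp⟩
  | succ s ih =>
    obtain ⟨T, hTS, hT⟩ := ih (by lia)
    have hcover : #(T.biUnion fun t => insert t {z ∈ S | G.Adj t z}) < #S := by
      refine lt_of_le_of_lt (card_biUnion_le_card_mul _ _ (d + 1) fun t ht => ?_) (hT.card_eq ▸ hs)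
      exact (card_insert_le _ _).trans (Nat.succ_le_succ (hd t (hTS ht)))
    obtain ⟨y, hyS, hy⟩ := exists_mem_notMem_of_card_lt_card hcover
    simp only [mem_biUnion, mem_insert, mem_filter, hyS, true_and, not_exists, not_and,
      not_or] at hy
    have hyT : y ∉ T := fun h => (hy y h).1 rfl
    refine ⟨insert y T, insert_subset hyS hTS, ?_, by rw [card_insert_of_notMem hyT, hT.card_eq]⟩
    rw [coe_insert, SimpleGraph.IsIndepSet, Set.pairwise_insert_of_notMem (by simpa using hyT)]
    exact ⟨hT.isIndepSet, fun t ht => ⟨fun h => (hy t ht).2 h.symm, (hy t ht).2⟩⟩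

end Counting

section Distance

variable {V : Type*} {G : SimpleGraph V}

lemma dist_eq_two_of_adj_of_adj {x y z : V} (hxy : G.Adj x y) (hxz : G.Adj x z) (hyz : y ≠ z)
    (hadj : ¬G.Adj y z) : G.dist y z = 2 := by
  rw [SimpleGraph.dist, edist_eq_two_iff.2 ⟨hyz, hadj, x, hxy.symm, hxz.symm⟩]
  rfl

lemma exists_geodesic_of_dist_eq (hG : G.Connected) {x y : V} {D : ℕ} (hxy : G.dist x y = D) :
    ∃ p : ℕ → V, ∀ i j, i ≤ j → j ≤ D → G.dist (p i) (p j) = j - i := by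
  obtain ⟨w, hw⟩ := hG.exists_walk_length_eq_dist x y
  refine ⟨w.getVert, fun i j hij hj => ?_⟩
  have := length_eq_dist_of_subwalk hw (((w.take j).isSubwalk_drop i).trans (w.isSubwalk_take j))
  rw [Walk.drop_length, Walk.take_length, hw, hxy, Walk.take_getVert] at this
  simpa [hij, hj] using this.symm

end Distance

namespace IsDRG

variable {V : Type*} [Fintype V] {G : SimpleGraph V} {D : ℕ} {b c a : ℕ → ℕ}

section Cardinalities

variable [DecidableRel G.Adj]

lemma card_filter_adj_dist_succ (h : IsDRG G D b c a) {x y : V} {i : ℕ} (hi : i ≤ D)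
    (hxy : G.dist x y = i) : #{z | G.Adj y z ∧ G.dist x z = i + 1} = b i := by
  simpa only [Nat.card_eq_fintype_card, Set.coe_ofPred, Fintype.card_subtype]
    using h.card_b i hi x y hxy

lemma card_filter_adj_dist_pred (h : IsDRG G D b c a) {x y : V} {i : ℕ} (hi : i ≤ D)
    (hxy : G.dist x y = i) : #{z | G.Adj y z ∧ G.dist x z = i - 1} = c i := by
  simpa only [Nat.card_eq_fintype_card, Set.coe_ofPred, Fintype.card_subtype]
    using h.card_c i hi x y hxy

lemma card_filter_adj_dist_eq (h : IsDRG G D b c a) {x y : V} {i : ℕ} (hi : i ≤ D)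
    (hxy : G.dist x y = i) : #{z | G.Adj y z ∧ G.dist x z = i} = a i := by
  simpa only [Nat.card_eq_fintype_card, Set.coe_ofPred, Fintype.card_subtype]
    using h.card_a i hi x y hxy

lemma isRegularOfDegree (h : IsDRG G D b c a) : G.IsRegularOfDegree (b 0) := by
  intro x
  rw [← h.card_filter_adj_dist_succ (Nat.zero_le D) (dist_self (v := x)),
    ← card_neighborFinset_eq_degree, neighborFinset_eq_filter]
  simp only [zero_add, dist_eq_one_iff_adj, and_self]

lemma adjMatrix_mulVec_dist (h : IsDRG G D b c a) (g : ℕ → ℝ) (x : V) :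
    (G.adjMatrix ℝ *ᵥ fun y => g (G.dist x y)) = fun y =>
      c (G.dist x y) * g (G.dist x y - 1) + a (G.dist x y) * g (G.dist x y)
        + b (G.dist x y) * g (G.dist x y + 1) := by
  ext y
  set i := G.dist x y
  have hsplit : ∀ z, G.Adj y z → g (G.dist x z) =
      (if G.dist x z = i - 1 then g (i - 1) else 0) + (if G.dist x z = i then g i else 0)
        + (if G.dist x z = i + 1 then g (i + 1) else 0) := by
    intro z hyz
    have hle : 1 ≤ i + G.dist x z := by
      have := h.connected.dist_triangle (u := y) (v := x) (w := z)
      rwa [dist_eq_one_iff_adj.2 hyz, dist_comm] at this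
    have := hyz.diff_dist_adj (u := x)
    grind
  have hle := h.le_diam x y
  rw [adjMatrix_mulVec_apply, neighborFinset_eq_filter,
    sum_congr rfl fun z hz => hsplit z (mem_filter.1 hz).2]
  simp_rw [sum_add_distrib, ← sum_filter, filter_filter, sum_const, nsmul_eq_mul]
  rw [h.card_filter_adj_dist_succ hle rfl, h.card_filter_adj_dist_pred hle rfl,
    h.card_filter_adj_dist_eq hle rfl]

end Cardinalities

lemma exists_geodesic (h : IsDRG G D b c a) :
    ∃ p : ℕ → V, ∀ i j, i ≤ j → j ≤ D → G.dist (p i) (p j) = j - i := by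
  obtain ⟨x, y, hxy⟩ := h.exists_diam
  exact exists_geodesic_of_dist_eq h.connected hxy

lemma exists_dist_eq_adj (h : IsDRG G D b c a) {i : ℕ} (hi : i < D) :
    ∃ x y z, G.dist x y = i ∧ G.Adj y z ∧ G.dist x z = i + 1 := by
  obtain ⟨p, hp⟩ := h.exists_geodesic
  refine ⟨p 0, p i, p (i + 1), hp 0 i i.zero_le hi.le, ?_, hp 0 (i + 1) (Nat.zero_le _) hi⟩
  rw [← dist_eq_one_iff_adj, hp i (i + 1) i.le_succ hi, Nat.add_sub_cancel_left]

lemma add_eq_valency (h : IsDRG G D b c a) {i : ℕ} (hi : i ≤ D) : c i + a i + b i = b 0 := by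
  classical
  obtain ⟨p, hp⟩ := h.exists_geodesic
  have hsum := congrFun (h.adjMatrix_mulVec_dist (fun _ => 1) (p 0)) (p i)
  simp only [adjMatrix_mulVec_apply, sum_const, card_neighborFinset_eq_degree,
    h.isRegularOfDegree.degree_eq, hp 0 i i.zero_le hi, Nat.sub_zero, nsmul_eq_mul, mul_one] at hsum
  exact_mod_cast hsum.symm

lemma b_diam (h : IsDRG G D b c a) : b D = 0 := by
  classical
  obtain ⟨x, y, hxy⟩ := h.exists_diam
  rw [← h.card_filter_adj_dist_succ le_rfl hxy, card_eq_zero, filter_eq_empty_iff]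
  exact fun z _ hz => by have := h.le_diam x z; omega

lemma b_pos (h : IsDRG G D b c a) {i : ℕ} (hi : i < D) : 0 < b i := by
  classical
  obtain ⟨x, y, z, hxy, hyz, hxz⟩ := h.exists_dist_eq_adj hi
  rw [← h.card_filter_adj_dist_succ hi.le hxy]
  exact card_pos.2 ⟨z, by simp [hyz, hxz]⟩

lemma c_succ_pos (h : IsDRG G D b c a) {i : ℕ} (hi : i < D) : 0 < c (i + 1) := by
  classical
  obtain ⟨x, y, z, hxy, hyz, hxz⟩ := h.exists_dist_eq_adj hi
  rw [← h.card_filter_adj_dist_pred hi hxz]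
  exact card_pos.2 ⟨y, by simp [hyz.symm, hxy]⟩

lemma c_zero (h : IsDRG G D b c a) : c 0 = 0 := by
  classical
  obtain ⟨x, -⟩ := h.exists_diam
  rw [← h.card_filter_adj_dist_pred (Nat.zero_le D) (dist_self (v := x)), card_eq_zero,
    filter_eq_empty_iff]
  rintro z - ⟨hxz, hz⟩
  rw [dist_eq_one_iff_adj.2 hxz] at hz
  omega

lemma a_zero (h : IsDRG G D b c a) : a 0 = 0 := by
  have := h.add_eq_valency (Nat.zero_le D)
  omega

lemma c_one (h : IsDRG G D b c a) (hD : 0 < D) : c 1 = 1 := by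
  classical
  obtain ⟨x, y, z, hxy, hyz, hxz⟩ := h.exists_dist_eq_adj hD
  rw [← h.card_filter_adj_dist_pred hD hxz, card_eq_one]
  refine ⟨x, ?_⟩
  ext w
  obtain rfl := h.connected.dist_eq_zero_iff.1 hxy
  simp only [mem_filter, mem_univ, true_and, Nat.sub_self,
    h.connected.dist_eq_zero_iff, mem_singleton]
  exact ⟨fun hw => hw.2.symm, by rintro rfl; exact ⟨hyz.symm, rfl⟩⟩

lemma b_succ_le (h : IsDRG G D b c a) {i : ℕ} (hi : i < D) : b (i + 1) ≤ b i := by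
  classical
  obtain ⟨p, hp⟩ := h.exists_geodesic
  have h01 : G.dist (p 0) (p 1) = 1 := hp 0 1 zero_le_one (by omega)
  have hi' : G.dist (p 1) (p (i + 1)) = i := hp 1 (i + 1) (by omega) hi
  rw [← h.card_filter_adj_dist_succ hi (hp 0 (i + 1) (Nat.zero_le _) hi),
    ← h.card_filter_adj_dist_succ hi.le hi']
  refine card_le_card fun z hz => ?_
  simp only [mem_filter, mem_univ, true_and] at hz ⊢
  have hlow := h.connected.dist_triangle (u := p 0) (v := p 1) (w := z)
  have hupp := hz.1.diff_dist_adj (u := p 1)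
  exact ⟨hz.1, by omega⟩

lemma card_inter_neighborFinset_of_adj [DecidableEq V] [DecidableRel G.Adj]
    (h : IsDRG G D b c a) (hD : 0 < D) {x y : V} (hxy : G.Adj x y) :
    #(G.neighborFinset x ∩ G.neighborFinset y) = a 1 := by
  rw [← h.card_filter_adj_dist_eq hD (dist_eq_one_iff_adj.2 hxy)]
  congr 1
  ext z
  simp [and_comm]

lemma card_inter_neighborFinset_of_dist_eq_two [DecidableEq V] [DecidableRel G.Adj]
    (h : IsDRG G D b c a) (hD : 2 ≤ D) {x y : V} (hxy : G.dist x y = 2) :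
    #(G.neighborFinset x ∩ G.neighborFinset y) = c 2 := by
  rw [← h.card_filter_adj_dist_pred hD hxy]
  congr 1
  ext z
  simp [and_comm]

lemma card_insert_inter_insert_le [DecidableEq V] [DecidableRel G.Adj]
    (h : IsDRG G D b c a) (hD : 2 ≤ D) {x y z : V} (hxy : G.Adj x y) (hxz : G.Adj x z)
    (hyz : y ≠ z) (hadj : ¬G.Adj y z) :
    #(insert y (G.neighborFinset x ∩ G.neighborFinset y) ∩
      insert z (G.neighborFinset x ∩ G.neighborFinset z)) ≤ c 2 - 1 := by
  rw [← h.card_inter_neighborFinset_of_dist_eq_two hD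
    (dist_eq_two_of_adj_of_adj hxy hxz hyz hadj),
    ← card_erase_of_mem (a := x) (by simp [hxy.symm, hxz.symm])]
  refine card_le_card fun w => ?_
  simp only [mem_inter, mem_insert, mem_neighborFinset, mem_erase]
  grind [SimpleGraph.irrefl, SimpleGraph.adj_comm]

lemma coclique_bound (h : IsDRG G D b c a) (hD : 2 ≤ D) {s : ℕ} (hs : s * (a 1 + 1) < b 0) :
    (s + 1) * (a 1 + 1) ≤ b 0 + (s + 1).choose 2 * (c 2 - 1) := by
  classical
  obtain ⟨x, -⟩ := h.exists_diam
  have hdeg : #(G.neighborFinset x) = b 0 := by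
    rw [card_neighborFinset_eq_degree, h.isRegularOfDegree.degree_eq]
  have hlocal : ∀ y ∈ G.neighborFinset x, #{z ∈ G.neighborFinset x | G.Adj y z} ≤ a 1 := by
    intro y hy
    rw [mem_neighborFinset] at hy
    rw [← h.card_inter_neighborFinset_of_adj (by omega) hy]
    exact card_le_card fun z => by simp
  obtain ⟨T, hTx, hT⟩ := exists_isNIndepSet_of_card_adj_le hlocal (hdeg ▸ hs)
  have hTadj : ∀ y ∈ T, G.Adj x y := fun y hy => (mem_neighborFinset ..).1 (hTx hy)
  let N (y : V) : Finset V := insert y (G.neighborFinset x ∩ G.neighborFinset y)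
  have hcard : ∀ y ∈ T, #(N y) = a 1 + 1 := fun y hy => by
    rw [card_insert_of_notMem (by simp), h.card_inter_neighborFinset_of_adj (by omega) (hTadj y hy)]
  calc (s + 1) * (a 1 + 1) = ∑ y ∈ T, #(N y) := by
        rw [sum_congr rfl hcard, sum_const, hT.card_eq, smul_eq_mul]
    _ ≤ #(T.biUnion N) + (#T).choose 2 * (c 2 - 1) :=
        sum_card_le_card_biUnion_add fun y hy z hz hyz =>
          h.card_insert_inter_insert_le hD (hTadj y hy) (hTadj z hz) hyz (hT.isIndepSet hy hz hyz)
    _ ≤ b 0 + (s + 1).choose 2 * (c 2 - 1) := by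
        rw [hT.card_eq, ← hdeg]
        gcongr
        exact biUnion_subset.2 fun y hy => insert_subset (hTx hy) inter_subset_left

end IsDRG

/-- The size `kᵢ = b₀ ⋯ bᵢ₋₁ / (c₁ ⋯ cᵢ)` of a sphere of radius `i` in a distance-regular graph
with intersection numbers `b` and `c`. -/
noncomputable def sphereSize (b c : ℕ → ℕ) (i : ℕ) : ℝ :=
  ∏ j ∈ range i, (b j : ℝ) / c (j + 1)

lemma sphereSize_zero (b c : ℕ → ℕ) : sphereSize b c 0 = 1 :=
  prod_range_zero _

lemma sphereSize_succ (b c : ℕ → ℕ) (i : ℕ) :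
    sphereSize b c (i + 1) = sphereSize b c i * (b i / c (i + 1)) :=
  prod_range_succ _ _

lemma sphereSize_nonneg (b c : ℕ → ℕ) (i : ℕ) : 0 ≤ sphereSize b c i :=
  prod_nonneg fun _ _ => by positivity

/-- `u` is the standard sequence of `θ` for the intersection numbers `b`, `c`, `a` in diameter `D`:
`u 0, …, u D` are the cosines of the eigenvalue `θ`. The out-of-range values `u (0 - 1)` and
`u (D + 1)` are harmless, as a distance-regular graph has `c 0 = 0` and `b D = 0`. -/
structure IsStandardSeq (D : ℕ) (b c a : ℕ → ℕ) (θ : ℝ) (u : ℕ → ℝ) : Prop where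
  zero : u 0 = 1
  recurrence : ∀ i ≤ D, c i * u (i - 1) + a i * u i + b i * u (i + 1) = θ * u i

lemma IsStandardSeq.one_le_sum_sphereSize_mul_sq {D : ℕ} {b c a : ℕ → ℕ} {θ : ℝ} {u : ℕ → ℝ}
    (hu : IsStandardSeq D b c a θ u) :
    1 ≤ ∑ i ∈ range (D + 1), sphereSize b c i * u i ^ 2 :=
  le_trans (by simp [sphereSize_zero, hu.zero]) (single_le_sum
    (fun i _ => mul_nonneg (sphereSize_nonneg b c i) (sq_nonneg (u i))) (mem_range.2 D.succ_pos))

/-- The matrix with entries `u (dist x y)`; for a standard sequence `u` it is a multiple of the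
primitive idempotent of the eigenvalue. -/
noncomputable def distMatrix {V : Type*} (G : SimpleGraph V) (u : ℕ → ℝ) : Matrix V V ℝ :=
  .of fun x y => u (G.dist x y)

lemma distMatrix_apply {V : Type*} (G : SimpleGraph V) (u : ℕ → ℝ) (x y : V) :
    distMatrix G u x y = u (G.dist x y) :=
  rfl

/-- The matrix with entries `E y z - E y x * E x z / u 1` for `E = distMatrix G u`, used for the
absolute bound: its rank is at most that of `E`, and it vanishes at adjacent neighbours `y`, `z`
of `x`. -/
noncomputable def residualMatrix {V : Type*} [Fintype V] [DecidableEq V] (G : SimpleGraph V)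
    (u : ℕ → ℝ) (x : V) : Matrix V V ℝ :=
  distMatrix G u * (1 - vecMulVec (Pi.single x (u 1)⁻¹) (distMatrix G u x))

lemma residualMatrix_apply {V : Type*} [Fintype V] [DecidableEq V] (G : SimpleGraph V)
    (u : ℕ → ℝ) (x y z : V) : residualMatrix G u x y z =
      u (G.dist y z) - u (G.dist y x) * u (G.dist x z) * (u 1)⁻¹ := by
  rw [residualMatrix, mul_sub, mul_one, mul_vecMulVec, mulVec_single]
  simp [vecMulVec_apply, distMatrix_apply, mul_right_comm]

lemma submatrix_hadamard_residualMatrix {V : Type*} [Fintype V] [DecidableEq V]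
    (G : SimpleGraph V) {u : ℕ → ℝ} (hu₀ : u 0 = 1) (hu₂ : u 2 = 0) (x : V) :
    (distMatrix G u ⊙ residualMatrix G u x).submatrix ((↑) : G.neighborSet x → V)
      ((↑) : G.neighborSet x → V) = (1 - u 1) • 1 := by
  ext ⟨y, hy⟩ ⟨z, hz⟩
  have hyx : G.dist y x = 1 := dist_eq_one_iff_adj.2 (G.adj_symm hy)
  have hxz : G.dist x z = 1 := dist_eq_one_iff_adj.2 hz
  have hres : residualMatrix G u x y z = u (G.dist y z) - u 1 := by
    rw [residualMatrix_apply, hyx, hxz, mul_self_mul_inv]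
  simp only [submatrix_apply, hadamard_apply, hres, distMatrix_apply, Matrix.smul_apply, one_apply,
    Subtype.mk.injEq, smul_eq_mul, mul_ite, mul_one, mul_zero]
  split_ifs with hyz
  · rw [hyz, dist_self, hu₀, one_mul]
  · by_cases hadj : G.Adj y z
    · rw [dist_eq_one_iff_adj.2 hadj, sub_self, mul_zero]
    · rw [dist_eq_two_of_adj_of_adj hy hz hyz hadj, hu₂, zero_mul]

namespace IsDRG

variable {V : Type*} [Fintype V] {G : SimpleGraph V} {D : ℕ} {b c a : ℕ → ℕ} {θ : ℝ} {u : ℕ → ℝ}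
  {f : V → ℝ}

lemma sphereSize_succ_mul (h : IsDRG G D b c a) {i : ℕ} (hi : i < D) :
    sphereSize b c (i + 1) * c (i + 1) = sphereSize b c i * b i := by
  have : (c (i + 1) : ℝ) ≠ 0 := by exact_mod_cast (h.c_succ_pos hi).ne'
  rw [sphereSize_succ]
  field_simp

lemma sphereSize_one (h : IsDRG G D b c a) (hD : 0 < D) : sphereSize b c 1 = b 0 := by
  rw [sphereSize_succ, sphereSize_zero, h.c_one hD, Nat.cast_one, div_one, one_mul]

lemma sum_dist_mul (h : IsDRG G D b c a) (g : ℕ → ℝ) (f : V → ℝ) (x : V) :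
    ∑ y, g (G.dist x y) * f y = ∑ i ∈ range (D + 1), g i * ∑ y with G.dist x y = i, f y := by
  rw [← sum_fiberwise_of_maps_to
    fun y _ => mem_range.2 (Nat.lt_succ_of_le (h.le_diam x y))]
  refine sum_congr rfl fun i _ => ?_
  rw [mul_sum]
  exact sum_congr rfl fun y hy => by rw [(mem_filter.1 hy).2]

lemma sum_sphere_zero (h : IsDRG G D b c a) (f : V → ℝ) (x : V) :
    ∑ y with G.dist x y = 0, f y = f x := by
  classical
  simp [h.connected.dist_eq_zero_iff, sum_filter]

lemma isStandardSeq_one (h : IsDRG G D b c a) : IsStandardSeq D b c a (b 0) 1 where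
  zero := rfl
  recurrence i hi := by
    rw [← h.add_eq_valency hi]
    push_cast
    simp

section Adjacency

variable [DecidableRel G.Adj]

lemma sum_sphere_recurrence (h : IsDRG G D b c a) (hf : G.adjMatrix ℝ *ᵥ f = θ • f) (x : V)
    (i : ℕ) :
    θ * ∑ y with G.dist x y = i, f y =
      b (i - 1) * ∑ y with G.dist x y + 1 = i, f y + a i * ∑ y with G.dist x y = i, f y
        + c (i + 1) * ∑ y with G.dist x y = i + 1, f y := by
  have hc : (c 0 : ℝ) = 0 := by exact_mod_cast h.c_zero
  let g (j : ℕ) : ℝ := if j = i then 1 else 0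
  calc θ * ∑ y with G.dist x y = i, f y
      = (fun y => g (G.dist x y)) ⬝ᵥ (G.adjMatrix ℝ *ᵥ f) := by
        rw [hf, dotProduct_smul, smul_eq_mul]
        simp [dotProduct, g, sum_filter]
    _ = (G.adjMatrix ℝ *ᵥ fun y => g (G.dist x y)) ⬝ᵥ f := by
        rw [dotProduct_mulVec, ← mulVec_transpose, transpose_adjMatrix]
    _ = _ := by
        rw [h.adjMatrix_mulVec_dist, dotProduct]
        simp_rw [sum_filter, mul_sum, ← sum_add_distrib]
        refine sum_congr rfl fun y _ => ?_
        simp only [g]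
        rcases G.dist x y with _ | d <;> grind

lemma sum_sphere_eq (h : IsDRG G D b c a) (hu : IsStandardSeq D b c a θ u)
    (hf : G.adjMatrix ℝ *ᵥ f = θ • f) (x : V) {i : ℕ} (hi : i ≤ D) :
    ∑ y with G.dist x y = i, f y = sphereSize b c i * u i * f x := by
  have hstep := h.sum_sphere_recurrence hf x
  induction i using Nat.twoStepInduction with
  | zero => rw [h.sum_sphere_zero, sphereSize_zero, hu.zero, one_mul, one_mul]
  | one =>
    have hrec := hu.recurrence 0 D.zero_le
    specialize hstep 0
    simp only [h.sum_sphere_zero, h.c_zero, h.c_one hi, hu.zero, Nat.add_eq_zero_iff, one_ne_zero,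
      and_false, filter_false, sum_empty, Nat.cast_zero, Nat.cast_one, zero_add] at hstep hrec
    rw [h.sphereSize_one hi]
    linear_combination -hstep - f x * hrec
  | more i ih₀ ih₁ =>
    have hc : (c (i + 2) : ℝ) ≠ 0 := by exact_mod_cast (h.c_succ_pos hi).ne'
    have hrec := hu.recurrence (i + 1) (by omega)
    specialize hstep (i + 1)
    simp only [Nat.add_right_cancel_iff, Nat.add_sub_cancel, ih₀ (by omega), ih₁ (by omega)]
      at hstep hrec
    refine mul_left_cancel₀ hc ?_
    have h₁ := h.sphereSize_succ_mul (i := i) (by omega)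
    have h₂ := h.sphereSize_succ_mul (i := i + 1) (by omega)
    linear_combination -hstep - sphereSize b c (i + 1) * f x * hrec + u i * f x * h₁
      - u (i + 2) * f x * h₂

lemma distMatrix_mulVec (h : IsDRG G D b c a) (hu : IsStandardSeq D b c a θ u)
    (hf : G.adjMatrix ℝ *ᵥ f = θ • f) :
    distMatrix G u *ᵥ f = (∑ i ∈ range (D + 1), sphereSize b c i * u i ^ 2) • f := by
  ext x
  calc (distMatrix G u *ᵥ f) x = ∑ y, u (G.dist x y) * f y := rfl
    _ = ∑ i ∈ range (D + 1), u i * ∑ y with G.dist x y = i, f y := h.sum_dist_mul u f x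
    _ = (∑ i ∈ range (D + 1), sphereSize b c i * u i ^ 2) * f x := by
      rw [sum_mul]
      refine sum_congr rfl fun i hi => ?_
      rw [h.sum_sphere_eq hu hf x (Nat.lt_succ_iff.1 (mem_range.1 hi))]
      ring

lemma adjMatrix_mul_distMatrix (h : IsDRG G D b c a) (hu : IsStandardSeq D b c a θ u) :
    G.adjMatrix ℝ * distMatrix G u = θ • distMatrix G u := by
  ext y x
  have := congrFun (h.adjMatrix_mulVec_dist u x) y
  rw [hu.recurrence _ (h.le_diam x y)] at this
  rw [Matrix.smul_apply, distMatrix_apply, smul_eq_mul, dist_comm, ← this]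
  simp only [mul_apply, mulVec, dotProduct, distMatrix_apply, dist_comm]

end Adjacency

lemma card_sphere_eq (h : IsDRG G D b c a) (x : V) {i : ℕ} (hi : i ≤ D) :
    (#{y | G.dist x y = i} : ℝ) = sphereSize b c i := by
  classical
  have hone : G.adjMatrix ℝ *ᵥ (fun _ => 1) = (b 0 : ℝ) • fun _ => (1 : ℝ) := by
    ext y
    simp [h.isRegularOfDegree.degree_eq]
  simpa using h.sum_sphere_eq h.isStandardSeq_one hone x hi

lemma card_eq_sum_sphereSize (h : IsDRG G D b c a) :
    (Fintype.card V : ℝ) = ∑ i ∈ range (D + 1), sphereSize b c i := by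
  classical
  obtain ⟨x, -⟩ := h.exists_diam
  rw [← card_univ, card_eq_sum_card_fiberwise (t := range (D + 1)) (f := G.dist x)
    fun y _ => mem_coe.2 (mem_range.2 (Nat.lt_succ_of_le (h.le_diam x y)))]
  push_cast
  exact sum_congr rfl fun i hi => h.card_sphere_eq x (Nat.lt_succ_iff.1 (mem_range.1 hi))

lemma sphereSize_le_pow (h : IsDRG G D b c a) {i : ℕ} (hi : i ≤ D) :
    sphereSize b c i ≤ b 0 ^ i := by
  induction i with
  | zero => simp [sphereSize_zero]
  | succ i ih =>
    have hc : (1 : ℝ) ≤ c (i + 1) := by exact_mod_cast h.c_succ_pos hi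
    have hb : (b i : ℝ) ≤ b 0 := by exact_mod_cast (by have := h.add_eq_valency (i := i); omega)
    rw [sphereSize_succ, pow_succ]
    gcongr
    · exact ih (by omega)
    · exact (div_le_self (by positivity) hc).trans hb

lemma card_le_sum_pow (h : IsDRG G D b c a) :
    Fintype.card V ≤ ∑ i ∈ range (D + 1), b 0 ^ i := by
  have : (Fintype.card V : ℝ) ≤ ∑ i ∈ range (D + 1), (b 0 : ℝ) ^ i := by
    rw [h.card_eq_sum_sphereSize]
    exact sum_le_sum fun i hi => h.sphereSize_le_pow (Nat.lt_succ_iff.1 (mem_range.1 hi))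
  exact_mod_cast this

section Multiplicity

variable [DecidableEq V] [DecidableRel G.Adj]

lemma range_distMatrix_le_eigenspace (h : IsDRG G D b c a) (hu : IsStandardSeq D b c a θ u) :
    LinearMap.range (distMatrix G u).toLin' ≤ End.eigenspace (G.adjMatrix ℝ).toLin' θ := by
  rintro _ ⟨v, rfl⟩
  rw [End.mem_eigenspace_iff, toLin'_apply, toLin'_apply, mulVec_mulVec,
    h.adjMatrix_mul_distMatrix hu, smul_mulVec]

lemma rank_distMatrix_le (h : IsDRG G D b c a) (hu : IsStandardSeq D b c a θ u) :
    (distMatrix G u).rank ≤ eigMult G θ :=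
  Submodule.finrank_mono (h.range_distMatrix_le_eigenspace hu)

lemma eigMult_mul_sum_eq_card (h : IsDRG G D b c a) (hu : IsStandardSeq D b c a θ u) :
    eigMult G θ * ∑ i ∈ range (D + 1), sphereSize b c i * u i ^ 2 = Fintype.card V := by
  set t := ∑ i ∈ range (D + 1), sphereSize b c i * u i ^ 2
  have ht₀ : t ≠ 0 := (zero_lt_one.trans_le hu.one_le_sum_sphereSize_mul_sq).ne'
  have hproj : LinearMap.IsProj (End.eigenspace (G.adjMatrix ℝ).toLin' θ)
      (t⁻¹ • distMatrix G u).toLin' := by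
    constructor
    · intro v
      rw [map_smul]
      exact Submodule.smul_mem _ _ (h.range_distMatrix_le_eigenspace hu ⟨v, rfl⟩)
    · intro f hf
      rw [End.mem_eigenspace_iff, toLin'_apply] at hf
      rw [toLin'_apply, smul_mulVec, h.distMatrix_mulVec hu hf, inv_smul_smul₀ ht₀]
  have htrace : (distMatrix G u).trace = Fintype.card V := by
    simp [trace, distMatrix_apply, hu.zero]
  rw [eigMult, ← hproj.trace, trace_toLin'_eq, trace_smul, htrace, smul_eq_mul]
  field_simp

lemma eigMult_mul_valency_mul_sq_le (h : IsDRG G D b c a) (hD : 0 < D)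
    (hu : IsStandardSeq D b c a θ u) : eigMult G θ * (b 0 * u 1 ^ 2) ≤ Fintype.card V := by
  rw [← h.eigMult_mul_sum_eq_card hu, ← h.sphereSize_one hD]
  gcongr
  exact single_le_sum (f := fun i => sphereSize b c i * u i ^ 2)
    (fun i _ => mul_nonneg (sphereSize_nonneg b c i) (sq_nonneg _)) (mem_range.2 (by omega))

lemma valency_le_eigMult_sq (h : IsDRG G D b c a) (hu : IsStandardSeq D b c a θ u)
    (hu₁ : u 1 ≠ 1) (hu₂ : u 2 = 0) : b 0 ≤ eigMult G θ ^ 2 := by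
  obtain ⟨x, -⟩ := h.exists_diam
  have hunit : 1 - u 1 ∈ nonZeroDivisors ℝ :=
    mem_nonZeroDivisors_of_ne_zero (sub_ne_zero.2 hu₁.symm)
  calc b 0 = Fintype.card (G.neighborSet x) := by
        rw [card_neighborSet_eq_degree, h.isRegularOfDegree.degree_eq]
    _ = ((1 - u 1) • (1 : Matrix (G.neighborSet x) (G.neighborSet x) ℝ)).rank := by
        rw [rank_smul_of_mem_nonZeroDivisors _ hunit, rank_one]
    _ ≤ (distMatrix G u ⊙ residualMatrix G u x).rank := by
        rw [← submatrix_hadamard_residualMatrix G hu.zero hu₂ x]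
        exact rank_submatrix_le _ _ _
    _ ≤ (distMatrix G u).rank * (residualMatrix G u x).rank := rank_hadamard_le _ _
    _ ≤ (distMatrix G u).rank * (distMatrix G u).rank := by
        gcongr
        exact rank_mul_le_left _ _
    _ ≤ eigMult G θ ^ 2 := by
        rw [sq]
        gcongr <;> exact h.rank_distMatrix_le hu

end Multiplicity

end IsDRG

/-- The cosines `1, 1/β, 0, -c₂/(βb₂)` of the eigenvalue `a₃` of a Shilla graph with
`b(Γ) = β`. -/
noncomputable def shillaCosine (b c : ℕ → ℕ) (β : ℕ) : ℕ → ℝ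
  | 0 => 1
  | 1 => (β : ℝ)⁻¹
  | 2 => 0
  | _ => -(c 2 / (β * b 2))

namespace IsShilla

variable {V : Type*} [Fintype V] [DecidableEq V] {G : SimpleGraph V} [DecidableRel G.Adj]
  {b c a : ℕ → ℕ} {β : ℕ}

-- The recurrence in distance `3` forces an eigenvector `f` for `a₃` to sum to zero over each sphere
-- of radius `2`, and the recurrence in distance `1` then reads `a₃² = b₀ + a₁a₃`.
lemma valency_eq (h : IsShilla G b c a) (hβ : a 3 = a 1 + β) : b 0 = β * a 3 := by
  obtain ⟨f, hf₀, hf⟩ := h.second.1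
  obtain ⟨x, hx⟩ := Function.ne_iff.1 hf₀
  have hb₂ : (b 2 : ℝ) ≠ 0 := by exact_mod_cast (h.drg.b_pos (by norm_num : 2 < 3)).ne'
  have hβ' : (a 3 : ℝ) = a 1 + β := by exact_mod_cast hβ
  have hc₁ : (c 1 : ℝ) = 1 := by exact_mod_cast h.drg.c_one (by norm_num)
  have ha₀ : (a 0 : ℝ) = 0 := by exact_mod_cast h.drg.a_zero
  have hstep := h.drg.sum_sphere_recurrence hf x
  have hsphere₁ : ∑ y with G.dist x y = 1, f y = a 3 * f x := by
    have := hstep 0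
    simp only [h.drg.sum_sphere_zero, ha₀, hc₁, Nat.add_eq_zero_iff, one_ne_zero, and_false,
      filter_false, sum_empty, Nat.reduceAdd] at this
    linear_combination -this
  have hsphere₂ : ∑ y with G.dist x y = 2, f y = 0 := by
    have hsphere₄ : ∑ y with G.dist x y = 4, f y = 0 :=
      sum_eq_zero fun y hy => by
        have := h.drg.le_diam x y
        have := (mem_filter.1 hy).2
        omega
    have := hstep 3
    simp only [Nat.reduceEqDiff, Nat.reduceAdd, Nat.reduceSub, hsphere₄] at this
    exact (mul_eq_zero.1 (by linarith)).resolve_left hb₂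
  have hmul : (b 0 : ℝ) * f x = β * a 3 * f x := by
    have := hstep 1
    simp only [Nat.add_eq_right, Nat.reduceAdd, Nat.sub_self, h.drg.sum_sphere_zero, hsphere₁,
      hsphere₂] at this
    linear_combination -this + a 3 * f x * hβ'
  exact_mod_cast mul_right_cancel₀ hx hmul

lemma b_one_eq (h : IsShilla G b c a) (hβ : a 3 = a 1 + β) :
    (b 1 : ℝ) = (β - 1) * (a 3 + 1) := by
  have hsum := h.drg.add_eq_valency (i := 1) (by norm_num)
  rw [h.drg.c_one (by norm_num), h.valency_eq hβ] at hsum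
  have hsum' : (1 + a 1 + b 1 : ℝ) = β * a 3 := by exact_mod_cast hsum
  have hβ' : (a 3 : ℝ) = a 1 + β := by exact_mod_cast hβ
  linear_combination hsum' + hβ'

lemma c_three_eq (h : IsShilla G b c a) (hβ : a 3 = a 1 + β) :
    (c 3 : ℝ) = (β - 1) * a 3 := by
  have hsum := h.drg.add_eq_valency (i := 3) le_rfl
  rw [h.drg.b_diam, h.valency_eq hβ] at hsum
  have hsum' : (c 3 + a 3 : ℝ) = β * a 3 := by exact_mod_cast hsum
  linear_combination hsum'

lemma two_le (h : IsShilla G b c a) (hβ : a 3 = a 1 + β) : 2 ≤ β := by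
  have hpos : (0 : ℝ) < (β - 1) * (a 3 + 1) := by
    rw [← h.b_one_eq hβ]
    exact_mod_cast h.drg.b_pos (by norm_num : 1 < 3)
  have : (1 : ℝ) < β := sub_pos.1 (pos_of_mul_pos_left hpos (by positivity))
  exact_mod_cast this

lemma isStandardSeq (h : IsShilla G b c a) (hβ : a 3 = a 1 + β) :
    IsStandardSeq 3 b c a (a 3) (shillaCosine b c β) where
  zero := rfl
  recurrence i hi := by
    have hβ₀ : (β : ℝ) ≠ 0 := by
      have := h.two_le hβ
      positivity
    have hb₂ : (b 2 : ℝ) ≠ 0 := by exact_mod_cast (h.drg.b_pos (by norm_num : 2 < 3)).ne'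
    have hc₁ : (c 1 : ℝ) = 1 := by exact_mod_cast h.drg.c_one (by norm_num)
    have hb₀ : (b 0 : ℝ) = β * a 3 := by exact_mod_cast h.valency_eq hβ
    have ha₃ : (a 3 : ℝ) = a 1 + β := by exact_mod_cast hβ
    interval_cases i <;> simp only [shillaCosine, Nat.reduceAdd, Nat.reduceSub]
    · rw [h.drg.c_zero, h.drg.a_zero, hb₀]
      field_simp
      simp
    · rw [hc₁, ha₃]
      field_simp
      ring
    · field_simp
      ring
    · rw [h.drg.b_diam]
      simp

lemma valency_le_eigMult_sq (h : IsShilla G b c a) (hβ : a 3 = a 1 + β) :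
    b 0 ≤ eigMult G (a 3) ^ 2 := by
  refine h.drg.valency_le_eigMult_sq (h.isStandardSeq hβ) ?_ rfl
  have : (1 : ℝ) < β := by exact_mod_cast h.two_le hβ
  exact (inv_lt_one_of_one_lt₀ this).ne

lemma eigMult_mul_le (h : IsShilla G b c a) (hβ : a 3 = a 1 + β) :
    (eigMult G (a 3) : ℝ) * a 3 ≤ Fintype.card V * β := by
  have hβ₀ : (0 : ℝ) < β := by exact_mod_cast zero_lt_two.trans_le (h.two_le hβ)
  have hb₀ : (b 0 : ℝ) = β * a 3 := by exact_mod_cast h.valency_eq hβ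
  have hmul := h.drg.eigMult_mul_valency_mul_sq_le (by norm_num) (h.isStandardSeq hβ)
  calc (eigMult G (a 3) : ℝ) * a 3
      = eigMult G (a 3) * (b 0 * shillaCosine b c β 1 ^ 2) * β := by
        rw [hb₀, shillaCosine]
        field_simp
    _ ≤ Fintype.card V * β := by gcongr

lemma a_three_pos (h : IsShilla G b c a) (hβ : a 3 = a 1 + β) : 0 < a 3 := by
  have := h.two_le hβ
  omega

lemma le_mul_c_two (h : IsShilla G b c a) (hβ : a 3 = a 1 + β) :
    2 * (a 3 : ℝ) - β ^ 2 + β + 2 ≤ β * (β + 1) * c 2 := by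
  have hs : β * (a 1 + 1) < b 0 := by
    rw [h.valency_eq hβ]
    have := h.two_le hβ
    exact Nat.mul_lt_mul_of_pos_left (by omega) (by omega)
  have hco := h.drg.coclique_bound (by norm_num) hs
  rw [h.valency_eq hβ, ← @Nat.cast_le ℝ] at hco
  have ha₁ : (a 1 : ℝ) = a 3 - β := by
    rw [hβ]
    push_cast
    ring
  push_cast [Nat.cast_choose_two, Nat.cast_sub (h.drg.c_succ_pos (by norm_num : 1 < 3)), ha₁] at hco
  linarith

lemma a_three_add_one_le (h : IsShilla G b c a) (hβ : a 3 = a 1 + β) (hlarge : 2 * β ^ 2 ≤ a 3) :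
    (a 3 : ℝ) + 1 ≤ 9 / 8 * a 3 := by
  have : 8 ≤ a 3 := by nlinarith [h.two_le hβ]
  have : (8 : ℝ) ≤ a 3 := by exact_mod_cast this
  linarith

lemma sphereSize_two_le (h : IsShilla G b c a) (hβ : a 3 = a 1 + β) (hlarge : 2 * β ^ 2 ≤ a 3) :
    sphereSize b c 2 ≤ 3 / 4 * (β ^ 2 * (β ^ 2 - 1)) * a 3 := by
  have hβ₂ : (2 : ℝ) ≤ β := by exact_mod_cast h.two_le hβ
  have hβ₁ : (0 : ℝ) ≤ β - 1 := by linarith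
  have ha₃ : (2 : ℝ) * β ^ 2 ≤ a 3 := by exact_mod_cast hlarge
  have ha₃' : (0 : ℝ) < a 3 := by exact_mod_cast h.a_three_pos hβ
  have hb₀ : (b 0 : ℝ) = β * a 3 := by exact_mod_cast h.valency_eq hβ
  have hc₂ : 3 / 2 * (a 3 : ℝ) ≤ β * (β + 1) * c 2 := by linarith [h.le_mul_c_two hβ]
  have hk₂ : sphereSize b c 2 * c 2 = β * a 3 * ((β - 1) * (a 3 + 1)) := by
    rw [h.drg.sphereSize_succ_mul (by norm_num), h.drg.sphereSize_one (by norm_num), hb₀,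
      h.b_one_eq hβ]
  refine le_of_mul_le_mul_right ?_ (by positivity : 0 < 3 / 2 * (a 3 : ℝ))
  calc sphereSize b c 2 * (3 / 2 * a 3)
      ≤ sphereSize b c 2 * (β * (β + 1) * c 2) := by
        gcongr
        exact sphereSize_nonneg b c 2
    _ = β * (β + 1) * (β * a 3 * ((β - 1) * (a 3 + 1))) := by rw [← hk₂]; ring
    _ ≤ β * (β + 1) * (β * a 3 * ((β - 1) * (9 / 8 * a 3))) := by
        gcongr
        exact h.a_three_add_one_le hβ hlarge
    _ = 3 / 4 * (β ^ 2 * (β ^ 2 - 1)) * a 3 * (3 / 2 * a 3) := by ring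

lemma sphereSize_three_le (h : IsShilla G b c a) (hβ : a 3 = a 1 + β)
    (hlarge : 2 * β ^ 2 ≤ a 3) : sphereSize b c 3 ≤ 9 / 8 * sphereSize b c 2 := by
  have hc₃ : (0 : ℝ) < c 3 := by exact_mod_cast h.drg.c_succ_pos (by norm_num : 2 < 3)
  have hβ₁ : (0 : ℝ) ≤ β - 1 := by
    have : (2 : ℝ) ≤ β := by exact_mod_cast h.two_le hβ
    linarith
  have hb₂ : (b 2 : ℝ) ≤ 9 / 8 * c 3 := by
    calc (b 2 : ℝ) ≤ b 1 := by exact_mod_cast h.drg.b_succ_le (by norm_num : 1 < 3)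
      _ = (β - 1) * (a 3 + 1) := h.b_one_eq hβ
      _ ≤ (β - 1) * (9 / 8 * a 3) := by
        gcongr
        exact h.a_three_add_one_le hβ hlarge
      _ = 9 / 8 * c 3 := by rw [h.c_three_eq hβ]; ring
  rw [sphereSize_succ, mul_comm]
  exact mul_le_mul_of_nonneg_right ((div_le_iff₀ hc₃).2 hb₂) (sphereSize_nonneg b c 2)

lemma card_lt (h : IsShilla G b c a) (hβ : a 3 = a 1 + β) (hlarge : 2 * β ^ 2 ≤ a 3) :
    (Fintype.card V : ℝ) < 2 * β ^ 4 * a 3 := by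
  have hβ₂ : (2 : ℝ) ≤ β := by exact_mod_cast h.two_le hβ
  have ha₃ : (1 : ℝ) ≤ a 3 := by exact_mod_cast h.a_three_pos hβ
  have hk₁ : sphereSize b c 1 = β * a 3 := by
    rw [h.drg.sphereSize_one (by norm_num)]
    exact_mod_cast h.valency_eq hβ
  have hk₂ := h.sphereSize_two_le hβ hlarge
  have hk₃ := h.sphereSize_three_le hβ hlarge
  have hsmall : 1 + β * (a 3 : ℝ) ≤ β ^ 2 * a 3 := by
    have : (1 : ℝ) ≤ β ^ 2 - β := by nlinarith
    nlinarith
  have hcard : (Fintype.card V : ℝ) = 1 + β * a 3 + sphereSize b c 2 + sphereSize b c 3 := by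
    rw [h.drg.card_eq_sum_sphereSize]
    simp [sum_range_succ, sphereSize_zero, hk₁]
  calc (Fintype.card V : ℝ)
      ≤ β ^ 2 * a 3 + 17 / 8 * (3 / 4 * (β ^ 2 * (β ^ 2 - 1)) * a 3) := by linarith
    _ < 2 * β ^ 4 * a 3 := by
      have : 0 < (β : ℝ) ^ 4 * a 3 := by positivity
      have : 0 ≤ (β : ℝ) ^ 2 * a 3 := by positivity
      linarith

lemma valency_lt (h : IsShilla G b c a) (hβ : a 3 = a 1 + β) : b 0 < 4 * β ^ 10 := by
  by_contra! hlarge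
  have hβ₂ := h.two_le hβ
  have ha₃ : 2 * β ^ 2 ≤ a 3 := by
    refine le_of_mul_le_mul_left (a := β) ?_ (by omega)
    calc β * (2 * β ^ 2) = 2 * β ^ 3 := by ring
      _ ≤ 4 * β ^ 10 := by
        gcongr <;> omega
      _ ≤ β * a 3 := h.valency_eq hβ ▸ hlarge
  have ha₃' : (0 : ℝ) < a 3 := by exact_mod_cast h.a_three_pos hβ
  have hmult : (eigMult G (a 3) : ℝ) < 2 * β ^ 5 := by
    refine lt_of_mul_lt_mul_right ?_ ha₃'.le
    calc (eigMult G (a 3) : ℝ) * a 3 ≤ Fintype.card V * β := h.eigMult_mul_le hβ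
      _ < 2 * β ^ 4 * a 3 * β := by
        gcongr
        exact h.card_lt hβ ha₃
      _ = 2 * β ^ 5 * a 3 := by ring
  have hmult' : eigMult G (a 3) < 2 * β ^ 5 := by exact_mod_cast hmult
  refine hlarge.not_gt ?_
  calc b 0 ≤ eigMult G (a 3) ^ 2 := h.valency_le_eigMult_sq hβ
    _ < (2 * β ^ 5) ^ 2 := by gcongr
    _ = 4 * β ^ 10 := by ring

end IsShilla

/-- For fixed `β ≥ 2`, a Shilla distance-regular graph with `b(Γ) = β` has valency
`k < 4β¹⁰`; consequently there are only finitely many such graphs. -/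
theorem stmt8 (β : ℕ) (hβ2 : 2 ≤ β) :
    (∀ (V : Type) [Fintype V] [DecidableEq V] (G : SimpleGraph V) [DecidableRel G.Adj]
        (b c a : ℕ → ℕ), IsShilla G b c a → a 3 = a 1 + β → b 0 < 4 * β ^ 10) ∧
    {n : ℕ | ∃ (G : SimpleGraph (Fin n)) (_ : DecidableRel G.Adj) (b c a : ℕ → ℕ),
        IsShilla G b c a ∧ a 3 = a 1 + β}.Finite := by
  refine ⟨fun V _ _ G _ b c a h hβ => h.valency_lt hβ, ?_⟩
  refine (Set.finite_Iic (∑ i ∈ range 4, (4 * β ^ 10) ^ i)).subset ?_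
  rintro n ⟨G, _, b, c, a, h, hβ⟩
  have hcard := h.drg.card_le_sum_pow
  rw [Fintype.card_fin] at hcard
  refine Set.mem_Iic.2 (hcard.trans ?_)
  gcongr
  exact (h.valency_lt hβ).le
end
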